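/- Let A be a unital C*-algebra over ℂ and let a, b ∈ A be self-adjoint; the element a + i·1 is invertible since the spectrum of a is real. Suppose 0 < ε < 1/2, ‖(a − b)(a + i·1)⁻¹‖ ≤ ε and ‖(a + i·1)⁻¹(a − b)‖ ≤ ε. Then ‖F(a) − F(b)‖ ≤ 4ε, where F(x) := cfc m x is the bounded transform obtained by applying the continuous functional calculus to the function m(λ) = λ(1 + λ²)^{-1/2}. -/

import Mathlib

/-!
Write `⟨a⟩ = √(1 + a²)`, `F(a) = a⟨a⟩⁻¹`, `D = a - b` and `X = F(a) - F(b)`. Since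
`F(a)a = ⟨a⟩ - ⟨a⟩⁻¹`, one finds the Sylvester equation
`⟨a⟩X + X⟨b⟩ = D + ⟨a⟩⁻¹D⟨b⟩⁻¹ - F(a)DF(b)`. Subtracting the same equation with `a` and `b`
interchanged gives a Lyapunov equation `PX + XP = …` with `P = ⟨a⟩ + ⟨b⟩`. If `|D| ≤ c⟨a⟩` and
`|D| ≤ c⟨b⟩`, polarization and `⟨a⟩⁻¹⟨a⟩⟨a⟩⁻¹ + F(a)⟨a⟩F(a) = ⟨a⟩` bound the right-hand side by
`2cP`, which forces `X ≤ c`.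

The bounds on `|D|` come from `⟨a⟩ = |a + i|`: the norm hypothesis says `|D| ≤ ε|a + i|`, and the
resolvent identity turns it into `|D| ≤ ε / (1 - ε) |b + i|`.
-/

open Complex (I)
open scoped Ring

theorem norm_sub_mul_inverse_le_div_one_sub {R : Type*} [NormedRing R] {z w : R} (hz : IsUnit z)
    (hw : IsUnit w) {ε : ℝ} (hε : ε < 1) (h : ‖(z - w) * z⁻¹ʳ‖ ≤ ε) :
    ‖(z - w) * w⁻¹ʳ‖ ≤ ε / (1 - ε) := by
  have resolvent_identity : (z - w) * w⁻¹ʳ =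
      (z - w) * z⁻¹ʳ + (z - w) * w⁻¹ʳ * ((z - w) * z⁻¹ʳ) := by
    calc (z - w) * w⁻¹ʳ
        = (z - w) * w⁻¹ʳ * (z * z⁻¹ʳ) := by
          rw [Ring.mul_inverse_cancel z hz, mul_one]
      _ = (z - w) * (w⁻¹ʳ * w) * z⁻¹ʳ +
            (z - w) * w⁻¹ʳ * ((z - w) * z⁻¹ʳ) := by noncomm_ring
      _ = _ := by rw [Ring.inverse_mul_cancel w hw, mul_one]
  have self_bound : ‖(z - w) * w⁻¹ʳ‖ ≤ ε + ‖(z - w) * w⁻¹ʳ‖ * ε := by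
    calc ‖(z - w) * w⁻¹ʳ‖
        ≤ ‖(z - w) * z⁻¹ʳ‖ +
            ‖(z - w) * w⁻¹ʳ‖ * ‖(z - w) * z⁻¹ʳ‖ := by
          conv_lhs => rw [resolvent_identity]
          exact norm_add_le_of_le le_rfl (norm_mul_le _ _)
      _ ≤ ε + ‖(z - w) * w⁻¹ʳ‖ * ε := by gcongr
  rw [le_div_iff₀ (sub_pos.2 hε)]
  linarith

theorem star_mul_sub_mul_add_le_of_nonneg {R : Type*} [NonUnitalRing R] [PartialOrder R]
    [StarRing R] [StarOrderedRing R] {x y : R} (hx : 0 ≤ x) (hy : 0 ≤ y) (u v : R) :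
    star u * (x - y) * v + star v * (x - y) * u ≤
      star u * (x + y) * u + star v * (x + y) * v := by
  have polarization : star u * (x + y) * u + star v * (x + y) * v -
      (star u * (x - y) * v + star v * (x - y) * u) =
      star (u - v) * x * (u - v) + star (u + v) * y * (u + v) := by
    rw [star_sub, star_add]
    noncomm_ring
  rw [← sub_nonneg, polarization]
  exact add_nonneg (star_left_conjugate_nonneg hx _) (star_left_conjugate_nonneg hy _)

section Order

variable {A : Type*} [CStarAlgebra A] [PartialOrder A] [StarOrderedRing A]

theorem star_mul_mul_add_le_star_mul_abs_mul {d : A} (hd : IsSelfAdjoint d) (u v : A) :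
    star u * d * v + star v * d * u ≤ star u * CFC.abs d * u + star v * CFC.abs d * v := by
  have h := star_mul_sub_mul_add_le_of_nonneg (CFC.posPart_nonneg d) (CFC.negPart_nonneg d) u v
  rwa [CFC.posPart_sub_negPart d, CFC.posPart_add_negPart d] at h

theorem exists_mul_star_le_smul (x : A) {s : A} (hs : IsStrictlyPositive s) :
    ∃ t : ℝ, x * star x ≤ t • s := by
  nontriviality A
  obtain ⟨δ, hδ, hδs⟩ := (CFC.exists_pos_algebraMap_le_iff hs.isSelfAdjoint).2
    fun _ => hs.spectrum_pos
  refine ⟨‖x‖ ^ 2 / δ, ?_⟩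
  calc x * star x ≤ algebraMap ℝ A (‖x‖ ^ 2) := CStarAlgebra.mul_star_le_algebraMap_norm_sq
    _ = (‖x‖ ^ 2 / δ) • algebraMap ℝ A δ := by
      rw [Algebra.smul_def, ← map_mul, div_mul_cancel₀ _ hδ.ne']
    _ ≤ (‖x‖ ^ 2 / δ) • s := smul_le_smul_of_nonneg_left hδs (by positivity)

theorem isUnit_of_isStrictlyPositive_mul_add_mul_star {w p : A} (hw : IsSelfAdjoint w)
    (h : IsStrictlyPositive (p * w + w * star p)) : IsUnit w := by
  obtain ⟨t, ht⟩ := exists_mul_star_le_smul p h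
  set s := p * w + w * star p with hs
  have complete_square : ((t + 1) • w) ^ 2 = s + (t • s - p * star p +
      star ((t + 1) • w - star p) * ((t + 1) • w - star p)) := by
    rw [star_sub, star_smul, star_star, hw.star_eq, star_trivial (t + 1), hs, sq]
    simp only [sub_mul, mul_sub, smul_mul_assoc, mul_smul_comm]
    module
  have h_sq : IsUnit (((t + 1) • w) ^ 2) := by
    rw [complete_square]
    exact (h.add_nonneg (add_nonneg (sub_nonneg.2 ht) (star_mul_self_nonneg _))).isUnit
  have h_smul : IsUnit (algebraMap ℝ A (t + 1) * w) := by
    rw [← Algebra.smul_def]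
    exact (isUnit_pow_iff two_ne_zero).1 h_sq
  exact ((Algebra.commute_algebraMap_left (t + 1) w).isUnit_mul_iff.1 h_smul).2

theorem le_algebraMap_of_mul_add_mul_le {x p : A} (hx : IsSelfAdjoint x)
    (hp : IsStrictlyPositive p) {c : ℝ} (h : p * x + x * p ≤ (2 * c) • p) :
    x ≤ algebraMap ℝ A c := by
  refine le_algebraMap_of_spectrum_le fun l hl => ?_
  by_contra! hcl
  have shift : p * (algebraMap ℝ A l - x) + (algebraMap ℝ A l - x) * star p =
      (2 * (l - c)) • p + ((2 * c) • p - (p * x + x * p)) := by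
    rw [hp.isSelfAdjoint.star_eq]
    simp only [mul_sub, sub_mul, Algebra.algebraMap_eq_smul_one, mul_smul_comm, smul_mul_assoc,
      mul_one, one_mul]
    module
  refine hl (isUnit_of_isStrictlyPositive_mul_add_mul_star (p := p)
    ((IsSelfAdjoint.algebraMap A (.all l)).sub hx) ?_)
  rw [shift]
  exact (hp.smul (by linarith)).add_nonneg (sub_nonneg.2 h)

theorem norm_le_of_le_algebraMap_of_neg_le_algebraMap {x : A} (hx : IsSelfAdjoint x) {c : ℝ}
    (hc : 0 ≤ c) (h : x ≤ algebraMap ℝ A c) (h_neg : -x ≤ algebraMap ℝ A c) : ‖x‖ ≤ c := by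
  rw [neg_le, ← map_neg] at h_neg
  rw [← cfc_id' ℝ x]
  exact norm_cfc_le hc fun l hl => abs_le.2
    ⟨(algebraMap_le_iff_le_spectrum hx).1 h_neg l hl, (le_algebraMap_iff_spectrum_le hx).1 h l hl⟩

theorem abs_le_smul_abs_of_norm_mul_inverse_le (x : A) {z : A} (hz : IsUnit z) {ε : ℝ}
    (h : ‖x * z⁻¹ʳ‖ ≤ ε) : CFC.abs x ≤ ε • CFC.abs z := by
  have hε : 0 ≤ ε := (norm_nonneg _).trans h
  have h_factor : x * z⁻¹ʳ * z = x := by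
    rw [mul_assoc, Ring.inverse_mul_cancel z hz, mul_one]
  have h_sq : star x * x ≤ (ε • CFC.abs z) * (ε • CFC.abs z) := by
    calc star x * x
        = star z * (star (x * z⁻¹ʳ) * (x * z⁻¹ʳ)) * z := by
          conv_lhs => rw [← h_factor]
          simp only [star_mul, mul_assoc]
      _ ≤ star z * algebraMap ℝ A (ε ^ 2) * z := by
          refine star_left_conjugate_le_conjugate ?_ z
          exact CStarAlgebra.star_mul_le_algebraMap_norm_sq.trans
            (algebraMap_mono A (by gcongr))
      _ = (ε • CFC.abs z) * (ε • CFC.abs z) := by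
          rw [smul_mul_smul_comm, CFC.abs_mul_abs, Algebra.algebraMap_eq_smul_one,
            mul_smul_comm, mul_one, smul_mul_assoc, sq]
  calc CFC.abs x = CFC.sqrt (star x * x) := rfl
    _ ≤ CFC.sqrt ((ε • CFC.abs z) * (ε • CFC.abs z)) := CFC.sqrt_le_sqrt _ _ h_sq
    _ = ε • CFC.abs z := CFC.sqrt_mul_self _ (smul_nonneg hε (CFC.abs_nonneg z))

end Order

section BoundedTransform

variable {A : Type*} [CStarAlgebra A] {a b : A}

/-- The bounded transform `F(a) = a(1 + a²)^(-1/2)` of a self-adjoint element; it is `0` when `a` is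
not self-adjoint. -/
noncomputable def boundedTransform (a : A) : A :=
  cfc (fun l : ℝ => l * (Real.sqrt (1 + l ^ 2))⁻¹) a

/-- The Japanese bracket `⟨a⟩ = (1 + a²)^(1/2)` of a self-adjoint element, through which the bounded
transform factors as `F(a) = a⟨a⟩⁻¹`; it is `0` when `a` is not self-adjoint. -/
noncomputable def japaneseBracket (a : A) : A :=
  cfc (fun l : ℝ => Real.sqrt (1 + l ^ 2)) a

theorem isSelfAdjoint_boundedTransform (a : A) : IsSelfAdjoint (boundedTransform a) :=
  cfc_predicate _ a

theorem isSelfAdjoint_japaneseBracket (a : A) : IsSelfAdjoint (japaneseBracket a) :=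
  cfc_predicate _ a

theorem sqrt_one_add_sq_ne_zero (l : ℝ) : Real.sqrt (1 + l ^ 2) ≠ 0 :=
  (Real.sqrt_pos.2 (by positivity)).ne'

theorem commute_japaneseBracket_boundedTransform (a : A) :
    Commute (japaneseBracket a) (boundedTransform a) :=
  cfc_commute_cfc _ _ a

theorem japaneseBracket_mul_self (ha : IsSelfAdjoint a) :
    japaneseBracket a * japaneseBracket a = 1 + a * a := by
  calc japaneseBracket a * japaneseBracket a
      = cfc (fun l : ℝ => Real.sqrt (1 + l ^ 2) * Real.sqrt (1 + l ^ 2)) a := by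
        rw [japaneseBracket, cfc_mul _ _ a]
    _ = cfc (fun l : ℝ => 1 + l * l) a :=
        cfc_congr fun l _ => by
          rw [Real.mul_self_sqrt (by positivity), sq]
    _ = 1 + a * a := by
        rw [cfc_const_add 1 _ a, map_one, cfc_mul (fun l : ℝ => l) (fun l : ℝ => l) a,
          cfc_id' ℝ a]

theorem japaneseBracket_mul_boundedTransform (ha : IsSelfAdjoint a) :
    japaneseBracket a * boundedTransform a = a := by
  have h_cont : Continuous fun l : ℝ => l * (Real.sqrt (1 + l ^ 2))⁻¹ :=
    continuous_id.mul (Continuous.inv₀ (by fun_prop) sqrt_one_add_sq_ne_zero)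
  calc japaneseBracket a * boundedTransform a
      = cfc (fun l : ℝ => Real.sqrt (1 + l ^ 2) * (l * (Real.sqrt (1 + l ^ 2))⁻¹)) a :=
        (cfc_mul _ _ a (by fun_prop) h_cont.continuousOn).symm
    _ = cfc (fun l : ℝ => l) a :=
        cfc_congr fun l _ => by
          have := sqrt_one_add_sq_ne_zero l
          field_simp
    _ = a := cfc_id' ℝ a

theorem boundedTransform_mul_japaneseBracket (ha : IsSelfAdjoint a) :
    boundedTransform a * japaneseBracket a = a := by
  rw [← (commute_japaneseBracket_boundedTransform a).eq, japaneseBracket_mul_boundedTransform ha]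

theorem isUnit_japaneseBracket (ha : IsSelfAdjoint a) : IsUnit (japaneseBracket a) :=
  (isUnit_cfc_iff _ a).2 fun l _ => sqrt_one_add_sq_ne_zero l

theorem isSelfAdjoint_inverse_japaneseBracket (a : A) :
    IsSelfAdjoint (japaneseBracket a)⁻¹ʳ :=
  (isSelfAdjoint_japaneseBracket a).ringInverse

theorem inverse_japaneseBracket_mul_eq_boundedTransform (ha : IsSelfAdjoint a) :
    (japaneseBracket a)⁻¹ʳ * a = boundedTransform a :=
  (Ring.inverse_mul_eq_iff_eq_mul _ _ _ (isUnit_japaneseBracket ha)).2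
    (japaneseBracket_mul_boundedTransform ha).symm

theorem mul_inverse_japaneseBracket_eq_boundedTransform (ha : IsSelfAdjoint a) :
    a * (japaneseBracket a)⁻¹ʳ = boundedTransform a :=
  (Ring.eq_mul_inverse_iff_mul_eq _ _ _ (isUnit_japaneseBracket ha)).2
    (boundedTransform_mul_japaneseBracket ha) |>.symm

theorem boundedTransform_mul_eq_sub (ha : IsSelfAdjoint a) :
    boundedTransform a * a = japaneseBracket a - (japaneseBracket a)⁻¹ʳ := by
  calc boundedTransform a * a
      = (japaneseBracket a)⁻¹ʳ * (1 + a * a) - (japaneseBracket a)⁻¹ʳ := by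
        rw [← inverse_japaneseBracket_mul_eq_boundedTransform ha]
        noncomm_ring
    _ = _ := by
        rw [← japaneseBracket_mul_self ha,
          Ring.inverse_mul_cancel_left _ _ (isUnit_japaneseBracket ha)]

theorem mul_boundedTransform_eq_sub (ha : IsSelfAdjoint a) :
    a * boundedTransform a = japaneseBracket a - (japaneseBracket a)⁻¹ʳ := by
  simpa only [star_mul, star_sub, ha.star_eq, (isSelfAdjoint_boundedTransform a).star_eq,
    (isSelfAdjoint_japaneseBracket a).star_eq, (isSelfAdjoint_inverse_japaneseBracket a).star_eq]
    using congrArg star (boundedTransform_mul_eq_sub ha)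

theorem inverse_conj_add_boundedTransform_conj_japaneseBracket (ha : IsSelfAdjoint a) :
    (japaneseBracket a)⁻¹ʳ * japaneseBracket a * (japaneseBracket a)⁻¹ʳ +
      boundedTransform a * japaneseBracket a * boundedTransform a = japaneseBracket a := by
  rw [Ring.inverse_mul_cancel _ (isUnit_japaneseBracket ha), one_mul,
    boundedTransform_mul_japaneseBracket ha, mul_boundedTransform_eq_sub ha, add_sub_cancel]

theorem japaneseBracket_mul_sub_add_sub_mul_japaneseBracket (ha : IsSelfAdjoint a)
    (hb : IsSelfAdjoint b) :
    japaneseBracket a * (boundedTransform a - boundedTransform b) +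
        (boundedTransform a - boundedTransform b) * japaneseBracket b =
      (a - b) + (japaneseBracket a)⁻¹ʳ * (a - b) * (japaneseBracket b)⁻¹ʳ -
        boundedTransform a * (a - b) * boundedTransform b := by
  have h_inv : (japaneseBracket a)⁻¹ʳ * (a - b) * (japaneseBracket b)⁻¹ʳ =
      boundedTransform a * (japaneseBracket b)⁻¹ʳ -
        (japaneseBracket a)⁻¹ʳ * boundedTransform b := by
    rw [mul_sub, sub_mul, inverse_japaneseBracket_mul_eq_boundedTransform ha, mul_assoc _ b,
      mul_inverse_japaneseBracket_eq_boundedTransform hb]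
  have h_transform : boundedTransform a * (a - b) * boundedTransform b =
      (japaneseBracket a - (japaneseBracket a)⁻¹ʳ) * boundedTransform b -
        boundedTransform a * (japaneseBracket b - (japaneseBracket b)⁻¹ʳ) := by
    rw [mul_sub, sub_mul, boundedTransform_mul_eq_sub ha, mul_assoc _ b,
      mul_boundedTransform_eq_sub hb]
  rw [h_inv, h_transform, mul_sub, sub_mul, japaneseBracket_mul_boundedTransform ha,
    boundedTransform_mul_japaneseBracket hb]
  noncomm_ring

theorem add_japaneseBracket_mul_sub_add_sub_mul_add_japaneseBracket (ha : IsSelfAdjoint a)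
    (hb : IsSelfAdjoint b) :
    (japaneseBracket a + japaneseBracket b) * (boundedTransform a - boundedTransform b) +
        (boundedTransform a - boundedTransform b) * (japaneseBracket a + japaneseBracket b) =
      (a - b + (a - b)) +
        ((japaneseBracket a)⁻¹ʳ * (a - b) * (japaneseBracket b)⁻¹ʳ +
          (japaneseBracket b)⁻¹ʳ * (a - b) * (japaneseBracket a)⁻¹ʳ) -
        (boundedTransform a * (a - b) * boundedTransform b +
          boundedTransform b * (a - b) * boundedTransform a) := by
  calc _ = (japaneseBracket a * (boundedTransform a - boundedTransform b) +
            (boundedTransform a - boundedTransform b) * japaneseBracket b) -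
          (japaneseBracket b * (boundedTransform b - boundedTransform a) +
            (boundedTransform b - boundedTransform a) * japaneseBracket a) := by noncomm_ring
    _ = _ := by
        rw [japaneseBracket_mul_sub_add_sub_mul_japaneseBracket ha hb,
          japaneseBracket_mul_sub_add_sub_mul_japaneseBracket hb ha]
        noncomm_ring

theorem isUnit_add_I_smul_one (ha : IsSelfAdjoint a) : IsUnit (a + I • (1 : A)) := by
  have h_notMem : -I ∉ spectrum ℂ a := fun h => by
    simpa using ha.im_eq_zero_of_mem_spectrum h
  have h_unit := (spectrum.notMem_iff.1 h_notMem).neg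
  rwa [neg_sub, map_neg, sub_neg_eq_add, Algebra.algebraMap_eq_smul_one] at h_unit

theorem star_add_I_smul_one_mul_self (ha : IsSelfAdjoint a) :
    star (a + I • (1 : A)) * (a + I • (1 : A)) = 1 + a * a := by
  have h_star : star (a + I • (1 : A)) = a - I • 1 := by
    rw [star_add, star_smul, star_one, ha.star_eq, Complex.star_def, Complex.conj_I, neg_smul,
      sub_eq_add_neg]
  have h_sq : (I • (1 : A)) * (I • 1) = -1 := by
    rw [smul_mul_smul_comm, Complex.I_mul_I, mul_one, neg_one_smul]
  have h_comm : Commute a (I • (1 : A)) := (Commute.one_right a).smul_right I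
  rw [h_star, ← h_comm.mul_self_sub_mul_self_eq', h_sq, sub_neg_eq_add, add_comm]

variable [PartialOrder A] [StarOrderedRing A]

theorem isStrictlyPositive_japaneseBracket (ha : IsSelfAdjoint a) :
    IsStrictlyPositive (japaneseBracket a) :=
  (isUnit_japaneseBracket ha).isStrictlyPositive (cfc_nonneg fun _ _ => Real.sqrt_nonneg _)

theorem abs_add_I_smul_one (ha : IsSelfAdjoint a) :
    CFC.abs (a + I • (1 : A)) = japaneseBracket a :=
  CFC.sqrt_unique ((japaneseBracket_mul_self ha).trans (star_add_I_smul_one_mul_self ha).symm)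
    (isStrictlyPositive_japaneseBracket ha).nonneg

theorem inverse_conj_add_boundedTransform_conj_le_smul (ha : IsSelfAdjoint a) {k : A} {c : ℝ}
    (hk : k ≤ c • japaneseBracket a) :
    (japaneseBracket a)⁻¹ʳ * k * (japaneseBracket a)⁻¹ʳ +
      boundedTransform a * k * boundedTransform a ≤ c • japaneseBracket a := by
  calc _ ≤ _ := add_le_add
        ((isSelfAdjoint_inverse_japaneseBracket a).conjugate_le_conjugate hk)
        ((isSelfAdjoint_boundedTransform a).conjugate_le_conjugate hk)
    _ = c • japaneseBracket a := by
        simp only [mul_smul_comm, smul_mul_assoc, ← smul_add,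
          inverse_conj_add_boundedTransform_conj_japaneseBracket ha]

theorem boundedTransform_sub_le_algebraMap_of_abs_sub_le (ha : IsSelfAdjoint a)
    (hb : IsSelfAdjoint b) {c : ℝ} (hca : CFC.abs (a - b) ≤ c • japaneseBracket a)
    (hcb : CFC.abs (a - b) ≤ c • japaneseBracket b) :
    boundedTransform a - boundedTransform b ≤ algebraMap ℝ A c := by
  have hF := isSelfAdjoint_boundedTransform (A := A)
  have hR := isSelfAdjoint_inverse_japaneseBracket (A := A)
  have polar := star_mul_mul_add_le_star_mul_abs_mul (ha.sub hb)
  have polar_one := polar 1 1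
  have polar_inverse := polar (japaneseBracket a)⁻¹ʳ (japaneseBracket b)⁻¹ʳ
  have polar_transform := polar (boundedTransform a) (-boundedTransform b)
  simp only [star_neg, star_one, (hF _).star_eq, (hR _).star_eq, one_mul, mul_one, neg_mul,
    mul_neg, neg_neg, ← neg_add] at polar_one polar_inverse polar_transform
  have conj_a := inverse_conj_add_boundedTransform_conj_le_smul ha hca
  have conj_b := inverse_conj_add_boundedTransform_conj_le_smul hb hcb
  refine le_algebraMap_of_mul_add_mul_le ((hF a).sub (hF b))
    ((isStrictlyPositive_japaneseBracket ha).add_nonneg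
      (isStrictlyPositive_japaneseBracket hb).nonneg) ?_
  rw [add_japaneseBracket_mul_sub_add_sub_mul_add_japaneseBracket ha hb, sub_eq_add_neg]
  set p := japaneseBracket a
  set q := japaneseBracket b
  set f := boundedTransform a
  set g := boundedTransform b
  set k := CFC.abs (a - b)
  calc (a - b + (a - b)) + (p⁻¹ʳ * (a - b) * q⁻¹ʳ + q⁻¹ʳ * (a - b) * p⁻¹ʳ) +
        -(f * (a - b) * g + g * (a - b) * f)
      ≤ (k + k) + (p⁻¹ʳ * k * p⁻¹ʳ + q⁻¹ʳ * k * q⁻¹ʳ) + (f * k * f + g * k * g) :=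
        add_le_add (add_le_add polar_one polar_inverse) polar_transform
    _ = (k + k) + ((p⁻¹ʳ * k * p⁻¹ʳ + f * k * f) + (q⁻¹ʳ * k * q⁻¹ʳ + g * k * g)) := by abel
    _ ≤ (c • p + c • q) + (c • p + c • q) :=
        add_le_add (add_le_add hca hcb) (add_le_add conj_a conj_b)
    _ = (2 * c) • (p + q) := by module

theorem norm_boundedTransform_sub_le_of_abs_sub_le (ha : IsSelfAdjoint a) (hb : IsSelfAdjoint b)
    {c : ℝ} (hc : 0 ≤ c) (hca : CFC.abs (a - b) ≤ c • japaneseBracket a)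
    (hcb : CFC.abs (a - b) ≤ c • japaneseBracket b) :
    ‖boundedTransform a - boundedTransform b‖ ≤ c := by
  refine norm_le_of_le_algebraMap_of_neg_le_algebraMap
    ((isSelfAdjoint_boundedTransform a).sub (isSelfAdjoint_boundedTransform b)) hc
    (boundedTransform_sub_le_algebraMap_of_abs_sub_le ha hb hca hcb) ?_
  rw [neg_sub]
  rw [← CFC.abs_neg, neg_sub] at hca hcb
  exact boundedTransform_sub_le_algebraMap_of_abs_sub_le hb ha hcb hca

end BoundedTransform

theorem norm_boundedTransform_sub_boundedTransform_le_general {A : Type*} [CStarAlgebra A]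
    {a b : A} (ha : IsSelfAdjoint a) (hb : IsSelfAdjoint b) {ε : ℝ} (hε : ε < 1)
    (h : ‖(a - b) * (a + I • 1)⁻¹ʳ‖ ≤ ε) :
    ‖boundedTransform a - boundedTransform b‖ ≤ ε / (1 - ε) := by
  let _ := CStarAlgebra.spectralOrder A
  have _ := CStarAlgebra.spectralOrderedRing A
  have ua := isUnit_add_I_smul_one ha
  have ub := isUnit_add_I_smul_one hb
  have hε₀ : 0 ≤ ε := (norm_nonneg _).trans h
  have h_shift : a + I • (1 : A) - (b + I • 1) = a - b := add_sub_add_right_eq_sub a b _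
  have h_b : ‖(a - b) * (b + I • 1)⁻¹ʳ‖ ≤ ε / (1 - ε) := by
    rw [← h_shift] at h ⊢
    exact norm_sub_mul_inverse_le_div_one_sub ua ub hε h
  have h_a : ‖(a - b) * (a + I • 1)⁻¹ʳ‖ ≤ ε / (1 - ε) :=
    h.trans (le_div_self hε₀ (sub_pos.2 hε) (sub_le_self 1 hε₀))
  refine norm_boundedTransform_sub_le_of_abs_sub_le ha hb
    (div_nonneg hε₀ (sub_pos.2 hε).le) ?_ ?_
  · rw [← abs_add_I_smul_one ha]
    exact abs_le_smul_abs_of_norm_mul_inverse_le _ ua h_a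
  · rw [← abs_add_I_smul_one hb]
    exact abs_le_smul_abs_of_norm_mul_inverse_le _ ub h_b

/-- **Quantitative estimate from the proof of Proposition A.4 (C*-algebra case).**
If `a, b` are self-adjoint elements of a unital C*-algebra, `0 < ε < 1/2`, and both
`‖(a − b)(a + i·1)⁻¹‖ ≤ ε` and `‖(a + i·1)⁻¹(a − b)‖ ≤ ε`, then the bounded transforms satisfy
`‖F(a) − F(b)‖ ≤ 4ε`, where `F(x) = cfc (fun λ => λ(1 + λ²)^(-1/2)) x`. -/
theorem norm_boundedTransform_sub_boundedTransform_le
    {A : Type*} [CStarAlgebra A] [PartialOrder A] [StarOrderedRing A]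
    (a b : A) (ha : IsSelfAdjoint a) (hb : IsSelfAdjoint b)
    (ε : ℝ) (hε₀ : 0 < ε) (hε₁ : ε < 1 / 2)
    (hnorm₁ : ‖(a - b) * Ring.inverse (a + Complex.I • 1)‖ ≤ ε)
    (hnorm₂ : ‖Ring.inverse (a + Complex.I • 1) * (a - b)‖ ≤ ε) :
    ‖cfc (fun l : ℝ => l * (Real.sqrt (1 + l ^ 2))⁻¹) a -
      cfc (fun l : ℝ => l * (Real.sqrt (1 + l ^ 2))⁻¹) b‖ ≤ 4 * ε := by
  refine (norm_boundedTransform_sub_boundedTransform_le_general ha hb (by linarith) hnorm₁).trans ?_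
  rw [div_le_iff₀ (by linarith)]
  nlinarith
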